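/- If the poset ([ℵ_ω]^ω, ⊆) has the weak Freese–Nation property and GCH holds, then there exists a saturated almost disjoint family in [ℵ_ω]^ω. -/

import Mathlib

universe u

/-!
Call a set `S` of countably infinite sets stable if it is closed under the weak Freese–Nation map
and under infinite subsets, and consider pairs `(S, A)` with `S` stable and `A ⊆ S` an almost
disjoint family saturated at every member of `S`. By Zorn's lemma there is a maximal pair, and it
remains to see that a pair missing some countably infinite set can be enlarged. Under CH, every
countably infinite set lies in a stable set `C` of size at most `ℵ₁`. The weak Freese–Nation
property makes `A` countable as seen from an `X ∈ C` containing no member of `A`: if `a ∈ A` meets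
`X` in an infinite set, then `X ∩ a ∈ S`, so an interpolant `X ∩ a ⊆ z ⊆ X` belongs to `S` and to
the countable set of images of `X`, while saturation at `z` leaves only finitely many members of
`A` that meet `z` in an infinite set. Hence, enumerating `C` in order type `ω₁`, at each stage only
countably many sets have to be avoided, and a diagonal argument either covers `X` up to a finite
set or provides a new member of the family inside `X`.
-/

open Cardinal Set

section AlmostDisjoint

variable {α : Type*} {A B : Set (Set α)} {X : Set α}

/-- Almost disjointness of a family of sets: distinct members have finite intersection. The members
are not required to be infinite. -/
def IsAlmostDisjoint (A : Set (Set α)) : Prop :=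
  A.Pairwise fun a b => (a ∩ b).Finite

/-- `X ⊆* ⋃ A'` for some finite `A' ⊆ A`: the second alternative in the definition of saturation. -/
def IsAlmostCoveredBy (X : Set α) (A : Set (Set α)) : Prop :=
  ∃ A' : Finset (Set α), ↑A' ⊆ A ∧ (X \ ⋃₀ ↑A').Finite

/-- The instance at `X` of saturation of the family `A`; thus `A` is saturated if it is saturated
at every countably infinite set. -/
def IsSaturatedAt (A : Set (Set α)) (X : Set α) : Prop :=
  (∃ a ∈ A, a ⊆ X) ∨ IsAlmostCoveredBy X A

/-- The members of `A` with infinite trace on `X`: the only ones that have to be avoided when a new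
set almost disjoint from `A` is chosen inside `X`. -/
def infiniteTrace (A : Set (Set α)) (X : Set α) : Set (Set α) :=
  {a ∈ A | (X ∩ a).Infinite}

theorem IsAlmostCoveredBy.mono (hAB : A ⊆ B) (h : IsAlmostCoveredBy X A) :
    IsAlmostCoveredBy X B :=
  h.imp fun _ hA' => ⟨hA'.1.trans hAB, hA'.2⟩

theorem IsSaturatedAt.mono (hAB : A ⊆ B) (h : IsSaturatedAt A X) : IsSaturatedAt B X :=
  h.imp (fun ⟨a, ha, haX⟩ => ⟨a, hAB ha, haX⟩) (IsAlmostCoveredBy.mono hAB)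

theorem IsAlmostDisjoint.finite_infiniteTrace (hA : IsAlmostDisjoint A)
    (hX : IsAlmostCoveredBy X A) : (infiniteTrace A X).Finite := by
  obtain ⟨A', hA'A, hfin⟩ := hX
  refine A'.finite_toSet.subset fun a ⟨haA, haX⟩ => ?_
  by_contra haA'
  have hmeet : (⋃ b ∈ A', a ∩ b).Finite :=
    A'.finite_toSet.biUnion fun b hb => hA haA (hA'A hb) fun hab => haA' (hab ▸ hb)
  refine haX ((hfin.union hmeet).subset fun w ⟨hwX, hwa⟩ => ?_)
  by_cases hw : w ∈ ⋃₀ (A' : Set (Set α))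
  · obtain ⟨b, hb, hwb⟩ := hw
    exact Or.inr (mem_biUnion hb ⟨hwa, hwb⟩)
  · exact Or.inl ⟨hwX, hw⟩

theorem exists_injective_forall_mem_of_antitone {D : ℕ → Set α} (hD : Antitone D)
    (hinf : ∀ n, (D n).Infinite) : ∃ f : ℕ → α, f.Injective ∧ ∀ n, f n ∈ D n := by
  classical
  obtain ⟨g, hgD, hg⟩ := exists_seq_of_forall_finset_exists
    (fun p : ℕ × α => p.2 ∈ D p.1) (fun p q => p.1 < q.1 ∧ p.2 ≠ q.2) fun s _ => by
      obtain ⟨k, hk⟩ := (s.image Prod.fst).exists_nat_subset_range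
      obtain ⟨y, hyD, hys⟩ := (hinf k).exists_notMem_finset (s.image Prod.snd)
      exact ⟨(k, y), hyD, fun p hp =>
        ⟨Finset.mem_range.1 (hk (Finset.mem_image_of_mem _ hp)),
          fun h => hys (Finset.mem_image.2 ⟨p, hp, h⟩)⟩⟩
  have hmono : StrictMono fun n => (g n).1 := fun m n h => (hg m n h).1
  exact ⟨fun n => (g n).2, .of_lt_imp_ne fun m n h => (hg m n h).2,
    fun n => hD hmono.le_apply (hgD n)⟩

theorem isAlmostCoveredBy_or_exists_infinite_subset (hA : A.Countable) (X : Set α) :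
    IsAlmostCoveredBy X A ∨ ∃ Y ⊆ X, Y.Infinite ∧ ∀ a ∈ A, (Y ∩ a).Finite := by
  refine or_iff_not_imp_left.2 fun hX => ?_
  have hinf : ∀ A' ⊆ A, A'.Finite → (X \ ⋃₀ A').Infinite := fun A' hA' hfin hdiff =>
    hX ⟨hfin.toFinset, by simpa using hA', by simpa using hdiff⟩
  rcases A.eq_empty_or_nonempty with rfl | hne
  · exact ⟨X, subset_rfl, by simpa using hinf ∅, by simp⟩
  obtain ⟨t, rfl⟩ := hA.exists_eq_range hne
  obtain ⟨f, hf, hfD⟩ := exists_injective_forall_mem_of_antitone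
    (D := fun n => X \ ⋃₀ (t '' Iic n))
    (fun m n hmn => sdiff_subset_sdiff_right (sUnion_mono (image_mono (Iic_subset_Iic.2 hmn))))
    (fun n => hinf _ (image_subset_range t _) ((finite_Iic n).image t))
  refine ⟨range f, range_subset_iff.2 fun n => (hfD n).1, infinite_range_of_injective hf, ?_⟩
  rintro _ ⟨i, rfl⟩
  refine ((finite_Iio i).image f).subset ?_
  rintro _ ⟨⟨n, rfl⟩, hn⟩
  exact mem_image_of_mem f <| mem_Iio.2 <| not_le.1 fun hin =>
    (hfD n).2 ⟨t i, mem_image_of_mem t hin, hn⟩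

end AlmostDisjoint

section Recursion

theorem exists_forall_of_wellFoundedLT {ι : Type*} [LT ι] [WellFoundedLT ι] {β : ι → Type*}
    {Q : ∀ i, (∀ j < i, β j) → β i → Prop} (hQ : ∀ i g, ∃ y, Q i g y) :
    ∃ f : ∀ i, β i, ∀ i, Q i (fun j _ => f j) (f i) := by
  choose G hG using hQ
  refine ⟨wellFounded_lt.fix G, fun i => ?_⟩
  rw [wellFounded_lt.fix_eq]
  exact hG i _

variable {ι : Type*} [LinearOrder ι] {α : Type*} {A : Set (Set α)}

theorem IsAlmostDisjoint.union_iUnion (hA : IsAlmostDisjoint A) {E : ι → Set (Set α)}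
    (hE : ∀ i, (E i).Subsingleton)
    (hlt : ∀ i, ∀ Y ∈ E i, ∀ a ∈ A ∪ ⋃ j < i, E j, (Y ∩ a).Finite) :
    IsAlmostDisjoint (A ∪ ⋃ i, E i) := by
  have hcomm (a b : Set α) (h : (a ∩ b).Finite) : (b ∩ a).Finite := inter_comm a b ▸ h
  have : Std.Symm fun a b : Set α => (a ∩ b).Finite := ⟨hcomm⟩
  have hEE : IsAlmostDisjoint (⋃ i, E i) := by
    intro Y hY Z hZ hYZ
    obtain ⟨i, hYi⟩ := mem_iUnion.1 hY
    obtain ⟨j, hZj⟩ := mem_iUnion.1 hZ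
    rcases lt_trichotomy i j with hij | rfl | hji
    · exact hcomm _ _ (hlt j Z hZj Y (Or.inr (mem_biUnion hij hYi)))
    · exact absurd (hE i hYi hZj) hYZ
    · exact hlt i Y hYi Z (Or.inr (mem_biUnion hji hZj))
  refine pairwise_union_of_symm.2 ⟨hA, hEE, fun a ha Y hY _ => ?_⟩
  obtain ⟨i, hYi⟩ := mem_iUnion.1 hY
  exact hcomm _ _ (hlt i Y hYi a (Or.inl ha))

theorem exists_subsingleton_isSaturatedAt_union {X : Set α}
    (hX : IsSaturatedAt A X ∨ (infiniteTrace A X).Countable) :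
    ∃ E : Set (Set α), E.Subsingleton ∧
      (∀ Y ∈ E, Y ⊆ X ∧ Y.Infinite ∧ ∀ a ∈ A, (Y ∩ a).Finite) ∧ IsSaturatedAt (A ∪ E) X := by
  rcases hX with hX | hX
  · exact ⟨∅, subsingleton_empty, by simp, hX.mono subset_union_left⟩
  rcases isAlmostCoveredBy_or_exists_infinite_subset hX X with hcov | ⟨Y, hYX, hY, hfin⟩
  · exact ⟨∅, subsingleton_empty, by simp,
      Or.inr (hcov.mono ((sep_subset _ _).trans subset_union_left))⟩
  refine ⟨{Y}, subsingleton_singleton, ?_, Or.inl ⟨Y, Or.inr rfl, hYX⟩⟩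
  rintro _ rfl
  refine ⟨hYX, hY, fun a ha => ?_⟩
  by_cases haX : (X ∩ a).Infinite
  · exact hfin a ⟨ha, haX⟩
  · exact (not_infinite.1 haX).subset (inter_subset_inter_left a hYX)

theorem IsAlmostDisjoint.exists_superset_forall_isSaturatedAt [WellFoundedLT ι]
    (hA : IsAlmostDisjoint A) (hι : ∀ i : ι, (Iio i).Countable) (X : ι → Set α)
    (hX : ∀ i, IsSaturatedAt A (X i) ∨ (infiniteTrace A (X i)).Countable) :
    ∃ B, A ⊆ B ∧ IsAlmostDisjoint B ∧ (∀ b ∈ B \ A, b.Infinite ∧ ∃ i, b ⊆ X i) ∧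
      ∀ i, IsSaturatedAt B (X i) := by
  have hstep (i : ι) (g : ∀ j < i, {E : Set (Set α) // E.Subsingleton}) :
      ∃ E : {E : Set (Set α) // E.Subsingleton},
        (∀ Y ∈ E.1, Y ⊆ X i ∧ Y.Infinite ∧ ∀ a ∈ A ∪ ⋃ (j) (h : j < i), (g j h).1,
          (Y ∩ a).Finite) ∧
        IsSaturatedAt ((A ∪ ⋃ (j) (h : j < i), (g j h).1) ∪ E.1) (X i) := by
    have hD : (⋃ (j) (h : j < i), (g j h).1).Countable :=
      (hι i).biUnion fun j h => (g j h).2.finite.countable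
    obtain ⟨E, hE, hEX⟩ := exists_subsingleton_isSaturatedAt_union <|
      (hX i).imp (IsSaturatedAt.mono subset_union_left) fun h =>
        (h.union hD).mono fun a ⟨ha, haX⟩ => ha.imp (fun ha => ⟨ha, haX⟩) id
    exact ⟨⟨E, hE⟩, hEX⟩
  obtain ⟨E, hE⟩ := exists_forall_of_wellFoundedLT hstep
  refine ⟨A ∪ ⋃ i, (E i).1, subset_union_left,
    hA.union_iUnion (fun i => (E i).2) fun i Y hY => ((hE i).1 Y hY).2.2, ?_, fun i => ?_⟩
  · rintro b ⟨hb | hb, hbA⟩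
    · exact absurd hb hbA
    · obtain ⟨i, hbi⟩ := mem_iUnion.1 hb
      exact ⟨((hE i).1 b hbi).2.1, i, ((hE i).1 b hbi).1⟩
  · refine (hE i).2.mono (union_subset (union_subset_union_right A ?_) ?_)
    · exact iUnion₂_subset fun j _ => subset_iUnion (fun j => (E j).1) j
    · exact subset_union_of_subset_right (subset_iUnion (fun j => (E j).1) i) A

end Recursion

section Closure

variable {β : Type*} {κ : Cardinal}

theorem iterate_biUnion_subset_and_mk_le (hκ : ℵ₀ ≤ κ) {P : Set β} {N : β → Set β}
    (hNP : ∀ p ∈ P, N p ⊆ P) (hNκ : ∀ p ∈ P, #(N p) ≤ κ) {s : Set β} (hsP : s ⊆ P)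
    (hsκ : #s ≤ κ) (n : ℕ) :
    (fun t => ⋃ p ∈ t, N p)^[n] s ⊆ P ∧ #↥((fun t => ⋃ p ∈ t, N p)^[n] s) ≤ κ := by
  induction n with
  | zero => exact ⟨hsP, hsκ⟩
  | succ n ih =>
    rw [Function.iterate_succ_apply']
    exact ⟨iUnion₂_subset fun p hp => hNP p (ih.1 hp), (mk_biUnion_le N _).trans <|
      (mul_le_mul' ih.2 (ciSup_le' fun p => hNκ _ (ih.1 p.2))).trans (mul_eq_self hκ).le⟩

theorem exists_superset_closed_mk_le (hκ : ℵ₀ ≤ κ) {P : Set β} {N : β → Set β}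
    (hNP : ∀ p ∈ P, N p ⊆ P) (hNκ : ∀ p ∈ P, #(N p) ≤ κ) {s : Set β} (hsP : s ⊆ P)
    (hsκ : #s ≤ κ) : ∃ C, s ⊆ C ∧ C ⊆ P ∧ (∀ p ∈ C, N p ⊆ C) ∧ #C ≤ κ := by
  have hL := iterate_biUnion_subset_and_mk_le hκ hNP hNκ hsP hsκ
  set L : ℕ → Set β := fun n => (fun t => ⋃ p ∈ t, N p)^[n] s
  refine ⟨⋃ n, L n, subset_iUnion L 0, iUnion_subset fun n => (hL n).1, fun p hp => ?_, ?_⟩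
  · obtain ⟨n, hn⟩ := mem_iUnion.1 hp
    have hsucc : L (n + 1) = ⋃ q ∈ L n, N q := Function.iterate_succ_apply' _ _ _
    exact (hsucc ▸ subset_biUnion_of_mem (u := N) hn).trans (subset_iUnion L (n + 1))
  · calc #(⋃ n, L n) ≤ ℵ₀ * ⨆ n, #(L n) := by simpa using mk_iUnion_le_lift L
      _ ≤ κ * κ := mul_le_mul' hκ (ciSup_le' fun n => (hL n).2)
      _ = κ := mul_eq_self hκ

end Closure

section Enumeration

theorem exists_range_eq_of_mk_le {ι β : Type u} {s : Set β} (hs : s.Nonempty) (h : #s ≤ #ι) :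
    ∃ e : ι → β, range e = s := by
  have := hs.to_subtype
  obtain ⟨e, he⟩ := (Function.exists_surjective_iff (α := ι)).2 ⟨inferInstance, (le_def s ι).1 h⟩
  exact ⟨Subtype.val ∘ e, by rw [he.range_comp, Subtype.range_coe]⟩

theorem countable_Iio_toType_ord_aleph_one (i : (ord ℵ₁).ToType) : (Iio i).Countable := by
  rw [← le_aleph0_iff_set_countable, ← lt_aleph_one_iff]
  exact (mk_Iio_lt i (by simp)).trans_eq (mk_ord_toType ℵ₁)

end Enumeration

section WeakFreeseNation

/-- `F` witnesses the weak Freese–Nation property of the poset `P`, presented as a set of elements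
of an ambient order; the values of `F` outside `P` are irrelevant. -/
structure IsWeakFreeseNationOn {β : Type*} [LE β] (P : Set β) (F : β → Set β) : Prop where
  countable : ∀ p ∈ P, (F p).Countable
  subset : ∀ p ∈ P, F p ⊆ P
  exists_between : ∀ p ∈ P, ∀ q ∈ P, p ≤ q → ∃ r ∈ F p ∩ F q, p ≤ r ∧ r ≤ q

/-- `[α]^ω`, the set of countably infinite subsets of `α`. -/
def countablyInfiniteSets (α : Type*) : Set (Set α) :=
  {x | x.Countable ∧ x.Infinite}

/-- The sets that a stable family containing `s` has to contain: those in `F s`, and the infinite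
subsets of `s`. -/
def neighbours {α : Type*} (F : Set α → Set (Set α)) (s : Set α) : Set (Set α) :=
  F s ∪ {q | q ⊆ s ∧ q.Infinite}

/-- `S` is a set of countably infinite sets closed under `F` and under infinite subsets; such sets
play the role of the elementary submodels over which a family is built up piece by piece. -/
structure IsStable {α : Type*} (F : Set α → Set (Set α)) (S : Set (Set α)) : Prop where
  subset : S ⊆ countablyInfiniteSets α
  neighbours_subset : ∀ s ∈ S, neighbours F s ⊆ S

variable {α : Type u} {F : Set α → Set (Set α)} {S T A : Set (Set α)} {X : Set α}

theorem IsStable.union (hS : IsStable F S) (hT : IsStable F T) : IsStable F (S ∪ T) where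
  subset := union_subset hS.subset hT.subset
  neighbours_subset s hs := hs.elim
    (fun hs => (hS.neighbours_subset s hs).trans subset_union_left)
    fun hs => (hT.neighbours_subset s hs).trans subset_union_right

theorem IsStable.sUnion {c : Set (Set (Set α))} (hc : ∀ S ∈ c, IsStable F S) :
    IsStable F (⋃₀ c) where
  subset := sUnion_subset fun S hS => (hc S hS).subset
  neighbours_subset := fun s ⟨S, hS, hs⟩ =>
    ((hc S hS).neighbours_subset s hs).trans (subset_sUnion_of_mem hS)

theorem IsWeakFreeseNationOn.neighbours_subset
    (hF : IsWeakFreeseNationOn (countablyInfiniteSets α) F) (hX : X ∈ countablyInfiniteSets α) :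
    neighbours F X ⊆ countablyInfiniteSets α :=
  union_subset (hF.subset X hX) fun _ hq => ⟨hX.1.mono hq.1, hq.2⟩

theorem mk_powerset_le_continuum (hX : X.Countable) : #(𝒫 X) ≤ 𝔠 := by
  rw [mk_powerset, ← two_power_aleph0]
  exact power_le_power_left two_ne_zero hX.le_aleph0

theorem IsWeakFreeseNationOn.mk_neighbours_le
    (hF : IsWeakFreeseNationOn (countablyInfiniteSets α) F) (hX : X ∈ countablyInfiniteSets α) :
    #(neighbours F X) ≤ 𝔠 :=
  calc #(neighbours F X) ≤ #(F X) + #{q | q ⊆ X ∧ q.Infinite} := mk_union_le _ _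
    _ ≤ 𝔠 + 𝔠 := add_le_add ((hF.countable X hX).le_aleph0.trans aleph0_le_continuum)
      ((mk_le_mk_of_subset fun _ hq => hq.1).trans (mk_powerset_le_continuum hX.1))
    _ = 𝔠 := continuum_add_self

theorem IsWeakFreeseNationOn.exists_isStable_mem_mk_le
    (hF : IsWeakFreeseNationOn (countablyInfiniteSets α) F) (hX : X ∈ countablyInfiniteSets α) :
    ∃ C, IsStable F C ∧ X ∈ C ∧ #C ≤ 𝔠 := by
  obtain ⟨C, hXC, hCP, hCN, hC⟩ := exists_superset_closed_mk_le aleph0_le_continuum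
    (fun _ => hF.neighbours_subset) (fun _ => hF.mk_neighbours_le) (singleton_subset_iff.2 hX)
    ((mk_singleton X).trans_le (one_le_aleph0.trans aleph0_le_continuum))
  exact ⟨C, ⟨hCP, hCN⟩, hXC rfl, hC⟩

theorem IsWeakFreeseNationOn.countable_infiniteTrace
    (hF : IsWeakFreeseNationOn (countablyInfiniteSets α) F) (hS : IsStable F S) (hAS : A ⊆ S)
    (hA : IsAlmostDisjoint A) (hsat : ∀ z ∈ S, IsSaturatedAt A z)
    (hX : X ∈ countablyInfiniteSets α) (hAX : ¬ ∃ a ∈ A, a ⊆ X) :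
    (infiniteTrace A X).Countable := by
  have hfin : ∀ z ∈ F X ∩ {z ∈ S | z ⊆ X}, (infiniteTrace A z).Finite := fun z ⟨_, hzS, hzX⟩ =>
    hA.finite_infiniteTrace <| (hsat z hzS).resolve_left fun ⟨a, ha, haz⟩ =>
      hAX ⟨a, ha, haz.trans hzX⟩
  refine (((hF.countable X hX).mono inter_subset_left).biUnion
    fun z hz => (hfin z hz).countable).mono fun a ⟨haA, haX⟩ => ?_
  have hXaS : X ∩ a ∈ S :=
    hS.neighbours_subset a (hAS haA) (Or.inr ⟨inter_subset_right, haX⟩)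
  obtain ⟨z, ⟨hzF, hzFX⟩, haz, hzX⟩ :=
    hF.exists_between _ (hS.subset hXaS) X hX inter_subset_left
  have hzS : z ∈ S := hS.neighbours_subset _ hXaS (Or.inl hzF)
  exact mem_biUnion ⟨hzFX, hzS, hzX⟩ ⟨haA, haX.mono (subset_inter haz inter_subset_right)⟩

end WeakFreeseNation

section Approximation

variable {α : Type u} {F : Set α → Set (Set α)}

/-- An approximation to a saturated almost disjoint family: a stable set `p.1` together with an
almost disjoint family `p.2 ⊆ p.1` saturated at every member of `p.1`. Approximations are ordered
by componentwise inclusion. -/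
structure IsApproximation (F : Set α → Set (Set α)) (p : Set (Set α) × Set (Set α)) : Prop where
  isStable : IsStable F p.1
  subset : p.2 ⊆ p.1
  isAlmostDisjoint : IsAlmostDisjoint p.2
  isSaturatedAt : ∀ X ∈ p.1, IsSaturatedAt p.2 X

theorem IsApproximation.sSup {c : Set (Set (Set α) × Set (Set α))} (hchain : IsChain (· ≤ ·) c)
    (hc : ∀ p ∈ c, IsApproximation F p) : IsApproximation F (sSup c) where
  isStable := IsStable.sUnion <| forall_mem_image.2 fun _ hp => (hc _ hp).isStable
  subset := sUnion_subset <| forall_mem_image.2 fun p hp =>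
    (hc p hp).subset.trans (le_sSup hp).1
  isAlmostDisjoint :=
    (pairwise_sUnion hchain.directedOn.snd).2 <|
      forall_mem_image.2 fun _ hp => (hc _ hp).isAlmostDisjoint
  isSaturatedAt := by
    rintro X ⟨_, ⟨p, hp, rfl⟩, hX⟩
    exact ((hc p hp).isSaturatedAt X hX).mono (le_sSup hp).2

theorem IsApproximation.exists_ge_mem (hCH : (𝔠 : Cardinal.{u}) = ℵ₁)
    (hF : IsWeakFreeseNationOn (countablyInfiniteSets α) F) {p : Set (Set α) × Set (Set α)}
    (hp : IsApproximation F p) {X : Set α} (hX : X ∈ countablyInfiniteSets α) :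
    ∃ q, IsApproximation F q ∧ p ≤ q ∧ X ∈ q.1 := by
  obtain ⟨C, hC, hXC, hCcard⟩ := hF.exists_isStable_mem_mk_le hX
  obtain ⟨e, rfl⟩ := exists_range_eq_of_mk_le (ι := (ord ℵ₁).ToType) ⟨X, hXC⟩ <| by
    rwa [mk_ord_toType, ← hCH]
  obtain ⟨B, hAB, hB, hBnew, hBsat⟩ :=
    hp.isAlmostDisjoint.exists_superset_forall_isSaturatedAt countable_Iio_toType_ord_aleph_one
      e fun i => or_iff_not_imp_left.2 fun hi => hF.countable_infiniteTrace hp.isStable hp.subset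
        hp.isAlmostDisjoint hp.isSaturatedAt (hC.subset (mem_range_self i)) fun h => hi (Or.inl h)
  refine ⟨(p.1 ∪ range e, B), ⟨hp.isStable.union hC, fun b hb => ?_, hB, ?_⟩,
    ⟨subset_union_left, hAB⟩, Or.inr hXC⟩
  · by_cases hbA : b ∈ p.2
    · exact Or.inl (hp.subset hbA)
    · obtain ⟨hbinf, i, hbi⟩ := hBnew b ⟨hb, hbA⟩
      exact Or.inr (hC.neighbours_subset _ (mem_range_self i) (Or.inr ⟨hbi, hbinf⟩))
  · rintro Y (hY | ⟨i, rfl⟩)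
    · exact (hp.isSaturatedAt Y hY).mono hAB
    · exact hBsat i

end Approximation

theorem stmt18_general {α : Type u} (hCH : (𝔠 : Cardinal.{u}) = ℵ₁)
    (hwFN : ∃ F : Set α → Set (Set α),
      (∀ x : Set α, x.Countable → x.Infinite →
        (F x).Countable ∧ ∀ z ∈ F x, z.Countable ∧ z.Infinite) ∧
      (∀ x y : Set α, x.Countable → x.Infinite → y.Countable → y.Infinite →
        x ⊆ y → ∃ z ∈ F x ∩ F y, x ⊆ z ∧ z ⊆ y)) :
    ∃ A : Set (Set α),
      (∀ a ∈ A, a.Countable ∧ a.Infinite) ∧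
      (∀ a ∈ A, ∀ b ∈ A, a ≠ b → (a ∩ b).Finite) ∧
      (∀ X : Set α, X.Countable → X.Infinite →
        (∃ a ∈ A, a ⊆ X) ∨
        ∃ A' : Finset (Set α), ↑A' ⊆ A ∧ (X \ ⋃₀ ↑A').Finite) := by
  obtain ⟨F, hF₁, hF₂⟩ := hwFN
  have hF : IsWeakFreeseNationOn (countablyInfiniteSets α) F :=
    ⟨fun x hx => (hF₁ x hx.1 hx.2).1, fun x hx => (hF₁ x hx.1 hx.2).2,
      fun x hx y hy => hF₂ x y hx.1 hx.2 hy.1 hy.2⟩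
  obtain ⟨⟨S, A⟩, hmax⟩ := zorn_le₀ {p | IsApproximation F p} fun c hc hchain =>
    ⟨sSup c, .sSup hchain hc, fun _ => le_sSup⟩
  have hSA : IsApproximation F (S, A) := hmax.prop
  refine ⟨A, fun a ha => hSA.isStable.subset (hSA.subset ha),
    fun a ha b hb => hSA.isAlmostDisjoint ha hb, fun X hX hX' => hSA.isSaturatedAt X ?_⟩
  obtain ⟨q, hq, hle, hXq⟩ := hSA.exists_ge_mem hCH hF ⟨hX, hX'⟩
  exact (hmax.le_of_ge hq hle).1 hXq

/-- If GCH holds and `([ℵ_ω]^ω, ⊆)` has the weak Freese–Nation property, then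
there is a saturated almost disjoint family in `[ℵ_ω]^ω`. -/
theorem stmt18 {α : Type u} (hα : Cardinal.mk α = Cardinal.aleph Ordinal.omega0)
    (hGCH : ∀ c : Cardinal.{u}, Cardinal.aleph0 ≤ c → 2 ^ c = Order.succ c)
    (hwFN : ∃ F : Set α → Set (Set α),
      (∀ x : Set α, x.Countable → x.Infinite →
        (F x).Countable ∧ ∀ z ∈ F x, z.Countable ∧ z.Infinite) ∧
      (∀ x y : Set α, x.Countable → x.Infinite → y.Countable → y.Infinite →
        x ⊆ y → ∃ z ∈ F x ∩ F y, x ⊆ z ∧ z ⊆ y)) :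
    ∃ A : Set (Set α),
      (∀ a ∈ A, a.Countable ∧ a.Infinite) ∧
      (∀ a ∈ A, ∀ b ∈ A, a ≠ b → (a ∩ b).Finite) ∧
      (∀ X : Set α, X.Countable → X.Infinite →
        (∃ a ∈ A, a ⊆ X) ∨
        ∃ A' : Finset (Set α), ↑A' ⊆ A ∧ (X \ ⋃₀ ↑A').Finite) :=
  stmt18_general ((hGCH ℵ₀ le_rfl).trans succ_aleph0) hwFN
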